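/- Under the Coxeter-functor setup with two projection families (P_i on H and P̃_i on H̃, both summing to αI with α > 1, inclusion isometries Γ_i, Γ̃_i, operators Δ_i, Δ̃_i satisfying the Coxeter relations and Σ_iΔ_iΔ_i* = (α/(α−1))I_Ĥ, Σ_iΔ̃_iΔ̃_i* = (α/(α−1))I_{H̃̂}, Q_i = Δ_iΔ_i*, Q̃_i = Δ̃_iΔ̃_i*), suppose T : H → H̃ is a bounded invertible operator with T(range P_i) = range P̃_i for all i. Set T_i = Γ̃_i*TΓ_i, T̂ = ((α−1)/α)Σ_iΔ̃_iT_iΔ_i*, and define (T⁻¹)^ analogously from T⁻¹. Then T̂ is invertible with inverse (T⁻¹)^, and T̂*(range Q̃_i) = range Q_i for all i = 1,…,n; in particular the systems (Ĥ; range Q_1,…,range Q_n) and (H̃̂; range Q̃_1,…,range Q̃_n) are isomorphic. -/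

import Mathlib

/-!
Write `C i = (Γ' i)† T (Γ i)` for the compressions of `T`. When `T` maps `ran Γ i` into
`ran Γ' i`, we have `Γ' i ∘ C i = T ∘ Γ i`, so `∑ i, Γ i (Δ i)† = 0` forces
`∑ i, Γ' i (C i (Δ i)† x) = 0`. On families in the kernel of `x ↦ ∑ i, Γ' i (x i)` the Coxeter
relations make the Gram matrix of `Δ'` act as the scalar `α / (α - 1)`, whence
`(Δ' j)† T̂ = C j (Δ j)†`. This intertwining makes `T ↦ T̂` functorial, so it preserves inverses;
its adjoint `T̂† (Δ' j) = (Δ j) (C j)†`, together with the invertibility of `C j`, gives the ranges.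
-/

section

open ContinuousLinearMap
open scoped InnerProduct

variable {𝕜 : Type*} [RCLike 𝕜]

section Compression

variable {H H' H'' K K' K'' : Type*}
  [NormedAddCommGroup H] [InnerProductSpace 𝕜 H]
  [NormedAddCommGroup H'] [InnerProductSpace 𝕜 H'] [CompleteSpace H']
  [NormedAddCommGroup H''] [InnerProductSpace 𝕜 H''] [CompleteSpace H'']
  [NormedAddCommGroup K] [InnerProductSpace 𝕜 K]
  [NormedAddCommGroup K'] [InnerProductSpace 𝕜 K'] [CompleteSpace K']
  [NormedAddCommGroup K''] [InnerProductSpace 𝕜 K''] [CompleteSpace K'']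
  {V : K →L[𝕜] H} {W : K' →L[𝕜] H'}

theorem adjoint_apply_self_of_adjoint_comp_self (hW : W† ∘L W = 1) (x : K') : (W†) (W x) = x :=
  congr($hW x)

theorem range_comp_adjoint_of_adjoint_comp_self (hW : W† ∘L W = 1) :
    Set.range (W ∘L W†) = Set.range W :=
  Function.Surjective.range_comp
    (Function.LeftInverse.surjective (adjoint_apply_self_of_adjoint_comp_self hW)) W

/-- The compression `W† T V` of an operator `T` along `V` and `W`, that is, the block of `T` from
`ran V` to `ran W` when `V` and `W` are isometries. -/
noncomputable def compression (V : K →L[𝕜] H) (W : K' →L[𝕜] H') (T : H →L[𝕜] H') : K →L[𝕜] K' :=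
  W† ∘L T ∘L V

theorem compression_one (hW : W† ∘L W = 1) : compression W W 1 = 1 := hW

theorem apply_compression_apply {T : H →L[𝕜] H'} (hW : W† ∘L W = 1)
    (hT : Set.MapsTo T (Set.range V) (Set.range W)) (x : K) :
    W (compression V W T x) = T (V x) := by
  obtain ⟨y, hy⟩ := hT ⟨x, rfl⟩
  change W ((W†) (T (V x))) = T (V x)
  rw [← hy, adjoint_apply_self_of_adjoint_comp_self hW]

theorem compression_comp_compression {T : H →L[𝕜] H'} (hW : W† ∘L W = 1)
    (hT : Set.MapsTo T (Set.range V) (Set.range W)) (X : K'' →L[𝕜] H'') (U : H' →L[𝕜] H'') :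
    compression W X U ∘L compression V W T = compression V X (U ∘L T) := by
  ext x
  exact congr((X†) (U $(apply_compression_apply hW hT x)))

end Compression

variable {ι : Type*} [Fintype ι] {H H' H'' E E' E'' : Type*}
  [NormedAddCommGroup H] [InnerProductSpace 𝕜 H]
  [NormedAddCommGroup H'] [InnerProductSpace 𝕜 H'] [CompleteSpace H']
  [NormedAddCommGroup H''] [InnerProductSpace 𝕜 H''] [CompleteSpace H'']
  [NormedAddCommGroup E] [InnerProductSpace 𝕜 E] [CompleteSpace E]
  [NormedAddCommGroup E'] [InnerProductSpace 𝕜 E'] [CompleteSpace E']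
  [NormedAddCommGroup E''] [InnerProductSpace 𝕜 E'']
  {K K' K'' : ι → Type*}
  [∀ i, NormedAddCommGroup (K i)] [∀ i, InnerProductSpace 𝕜 (K i)] [∀ i, CompleteSpace (K i)]
  [∀ i, NormedAddCommGroup (K' i)] [∀ i, InnerProductSpace 𝕜 (K' i)] [∀ i, CompleteSpace (K' i)]
  [∀ i, NormedAddCommGroup (K'' i)] [∀ i, InnerProductSpace 𝕜 (K'' i)]
  [∀ i, CompleteSpace (K'' i)]
  {α : 𝕜} {Γ : ∀ i, K i →L[𝕜] H} {Γ' : ∀ i, K' i →L[𝕜] H'} {Γ'' : ∀ i, K'' i →L[𝕜] H''}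
  {Δ : ∀ i, K i →L[𝕜] E} {Δ' : ∀ i, K' i →L[𝕜] E'} {Δ'' : ∀ i, K'' i →L[𝕜] E''}

section Relations

variable [CompleteSpace H]

/-- The Coxeter relations between the isometries `Γ i` of a system of subspaces and the operators
`Δ i` of its image under the Coxeter functor, which turns systems with
`∑ i, Γ i ∘L (Γ i)† = α • 1` into systems with `∑ i, Δ i ∘L (Δ i)† = (α / (α - 1)) • 1`. -/
structure CoxeterRelations (α : 𝕜) (Γ : ∀ i, K i →L[𝕜] H) (Δ : ∀ i, K i →L[𝕜] E) : Prop where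
  adjoint_comp_self : ∀ i, (Δ i)† ∘L Δ i = 1
  sum_comp_adjoint : ∑ i, Γ i ∘L (Δ i)† = 0
  adjoint_comp_of_ne : ∀ i j, i ≠ j → (Δ i)† ∘L Δ j = (-(α - 1)⁻¹) • ((Γ i)† ∘L Γ j)

theorem CoxeterRelations.adjoint_apply_sum_apply (h : CoxeterRelations α Γ Δ) (hα₁ : α ≠ 1)
    (hΓ : ∀ i, (Γ i)† ∘L Γ i = 1) {x : ∀ i, K i} (hx : ∑ i, Γ i (x i) = 0) (j : ι) :
    ((Δ j)†) (∑ i, Δ i (x i)) = (α / (α - 1)) • x j := by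
  classical
  have gram_offdiag : ∀ i ∈ Finset.univ.erase j,
      ((Δ j)†) (Δ i (x i)) = (-(α - 1)⁻¹) • ((Γ j)†) (Γ i (x i)) := fun i hi ↦
    congr($(h.adjoint_comp_of_ne j i (Finset.ne_of_mem_erase hi).symm) (x i))
  have sum_offdiag : ∑ i ∈ Finset.univ.erase j, ((Γ j)†) (Γ i (x i)) = -x j := by
    rw [eq_neg_iff_add_eq_zero, ← map_zero ((Γ j)†), ← hx, map_sum,
      ← Finset.sum_erase_add _ _ (Finset.mem_univ j),
      adjoint_apply_self_of_adjoint_comp_self (hΓ j)]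
  have scalar : (α - 1)⁻¹ + 1 = α / (α - 1) := by
    field_simp [sub_ne_zero.2 hα₁]
    ring
  calc ((Δ j)†) (∑ i, Δ i (x i))
      = ∑ i ∈ Finset.univ.erase j, ((Δ j)†) (Δ i (x i)) + x j := by
        rw [map_sum, ← Finset.sum_erase_add _ _ (Finset.mem_univ j),
          adjoint_apply_self_of_adjoint_comp_self (h.adjoint_comp_self j)]
    _ = (α - 1)⁻¹ • x j + x j := by
        rw [Finset.sum_congr rfl gram_offdiag, ← Finset.smul_sum, sum_offdiag, neg_smul_neg]
    _ = (α / (α - 1)) • x j := by rw [← scalar, add_smul, one_smul]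

end Relations

/-- The action `T ↦ T̂` of the Coxeter functor on morphisms: along `Δ` and `Δ'` it reassembles the
compressions of `T` along `Γ` and `Γ'` into one operator. -/
noncomputable def coxeterTransform (α : 𝕜) (Γ : ∀ i, K i →L[𝕜] H) (Γ' : ∀ i, K' i →L[𝕜] H')
    (Δ : ∀ i, K i →L[𝕜] E) (Δ' : ∀ i, K' i →L[𝕜] E') (T : H →L[𝕜] H') : E →L[𝕜] E' :=
  ((α - 1) / α) • ∑ i, Δ' i ∘L compression (Γ i) (Γ' i) T ∘L (Δ i)†

theorem CoxeterRelations.adjoint_comp_coxeterTransform (h' : CoxeterRelations α Γ' Δ')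
    (hα₀ : α ≠ 0) (hα₁ : α ≠ 1) (hΓ' : ∀ i, (Γ' i)† ∘L Γ' i = 1)
    (hΓΔ : ∑ i, Γ i ∘L (Δ i)† = 0) {T : H →L[𝕜] H'}
    (hT : ∀ i, Set.MapsTo T (Set.range (Γ i)) (Set.range (Γ' i))) (j : ι) :
    (Δ' j)† ∘L coxeterTransform α Γ Γ' Δ Δ' T = compression (Γ j) (Γ' j) T ∘L (Δ j)† := by
  ext x
  have sum_eq_zero : ∑ i, Γ' i (compression (Γ i) (Γ' i) T (((Δ i)†) x)) = 0 := by
    have : ∑ i, Γ i (((Δ i)†) x) = 0 := by simpa [sum_apply] using congr($hΓΔ x)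
    simp only [apply_compression_apply (hΓ' _) (hT _), ← map_sum, this, map_zero]
  simp only [coxeterTransform, comp_apply, smul_apply, sum_apply, map_smul,
    h'.adjoint_apply_sum_apply hα₁ hΓ' sum_eq_zero]
  rw [← inv_div, inv_smul_smul₀ (div_ne_zero hα₀ (sub_ne_zero.2 hα₁))]

theorem CoxeterRelations.adjoint_coxeterTransform_comp (h' : CoxeterRelations α Γ' Δ')
    (hα₀ : α ≠ 0) (hα₁ : α ≠ 1) (hΓ' : ∀ i, (Γ' i)† ∘L Γ' i = 1)
    (hΓΔ : ∑ i, Γ i ∘L (Δ i)† = 0) {T : H →L[𝕜] H'}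
    (hT : ∀ i, Set.MapsTo T (Set.range (Γ i)) (Set.range (Γ' i))) (j : ι) :
    (coxeterTransform α Γ Γ' Δ Δ' T)† ∘L Δ' j = Δ j ∘L (compression (Γ j) (Γ' j) T)† := by
  simpa only [adjoint_comp, adjoint_adjoint] using
    congr(($(h'.adjoint_comp_coxeterTransform hα₀ hα₁ hΓ' hΓΔ hT j))†)

theorem CoxeterRelations.coxeterTransform_comp_coxeterTransform (h' : CoxeterRelations α Γ' Δ')
    (hα₀ : α ≠ 0) (hα₁ : α ≠ 1) (hΓ' : ∀ i, (Γ' i)† ∘L Γ' i = 1)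
    (hΓΔ : ∑ i, Γ i ∘L (Δ i)† = 0) {T : H →L[𝕜] H'}
    (hT : ∀ i, Set.MapsTo T (Set.range (Γ i)) (Set.range (Γ' i))) (U : H' →L[𝕜] H'') :
    coxeterTransform α Γ' Γ'' Δ' Δ'' U ∘L coxeterTransform α Γ Γ' Δ Δ' T =
      coxeterTransform α Γ Γ'' Δ Δ'' (U ∘L T) := by
  rw [coxeterTransform, smul_comp, finsetSum_comp, coxeterTransform.eq_def α Γ Γ'']
  congr! 2 with i
  simp only [comp_assoc, h'.adjoint_comp_coxeterTransform hα₀ hα₁ hΓ' hΓΔ hT]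
  rw [← comp_assoc (compression _ _ U), compression_comp_compression (hΓ' i) (hT i)]

variable [CompleteSpace H]

theorem coxeterTransform_one (hα₀ : α ≠ 0) (hα₁ : α ≠ 1) (hΓ : ∀ i, (Γ i)† ∘L Γ i = 1)
    (hΔ : ∑ i, Δ i ∘L (Δ i)† = (α / (α - 1)) • (1 : E →L[𝕜] E)) :
    coxeterTransform α Γ Γ Δ Δ 1 = 1 := by
  simp only [coxeterTransform, compression_one (hΓ _)]
  simp only [one_def, id_comp]
  rw [hΔ, ← inv_div, inv_smul_smul₀ (div_ne_zero hα₀ (sub_ne_zero.2 hα₁)), one_def]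

theorem CoxeterRelations.image_adjoint_coxeterTransform_range (h' : CoxeterRelations α Γ' Δ')
    (hα₀ : α ≠ 0) (hα₁ : α ≠ 1) (hΓ : ∀ i, (Γ i)† ∘L Γ i = 1) (hΓ' : ∀ i, (Γ' i)† ∘L Γ' i = 1)
    (hΓΔ : ∑ i, Γ i ∘L (Δ i)† = 0) {T : H →L[𝕜] H'}
    (hT : ∀ i, Set.MapsTo T (Set.range (Γ i)) (Set.range (Γ' i)))
    {S : H' →L[𝕜] H} (hST : S ∘L T = 1) (i : ι) :
    (coxeterTransform α Γ Γ' Δ Δ' T)† '' Set.range (Δ' i) = Set.range (Δ i) := by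
  have left_inverse : compression (Γ' i) (Γ i) S ∘L compression (Γ i) (Γ' i) T = 1 := by
    rw [compression_comp_compression (hΓ' i) (hT i), hST, compression_one (hΓ i)]
  have right_inverse :
      (compression (Γ i) (Γ' i) T)† ∘L (compression (Γ' i) (Γ i) S)† = 1 := by
    rw [← adjoint_comp, left_inverse, one_def, adjoint_id]
  have surjective : Function.Surjective ((compression (Γ i) (Γ' i) T)†) :=
    Function.RightInverse.surjective fun x ↦ congr($right_inverse x)
  rw [← Set.range_comp, ← coe_comp, h'.adjoint_coxeterTransform_comp hα₀ hα₁ hΓ' hΓΔ hT,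
    coe_comp, surjective.range_comp]

theorem stmt_14_general (hα₀ : α ≠ 0) (hα₁ : α ≠ 1)
    (hΓ : ∀ i, (Γ i)† ∘L Γ i = 1) (hΓ' : ∀ i, (Γ' i)† ∘L Γ' i = 1)
    (h : CoxeterRelations α Γ Δ) (h' : CoxeterRelations α Γ' Δ')
    (hΔ : ∑ i, Δ i ∘L (Δ i)† = (α / (α - 1)) • (1 : E →L[𝕜] E))
    (hΔ' : ∑ i, Δ' i ∘L (Δ' i)† = (α / (α - 1)) • (1 : E' →L[𝕜] E'))
    {T : H →L[𝕜] H'} {S : H' →L[𝕜] H} (hTS : T ∘L S = 1) (hST : S ∘L T = 1)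
    (hT : ∀ i, T '' Set.range (Γ i) = Set.range (Γ' i)) :
    coxeterTransform α Γ Γ' Δ Δ' T ∘L coxeterTransform α Γ' Γ Δ' Δ S = 1 ∧
    coxeterTransform α Γ' Γ Δ' Δ S ∘L coxeterTransform α Γ Γ' Δ Δ' T = 1 ∧
    ∀ i, (coxeterTransform α Γ Γ' Δ Δ' T)† '' Set.range (Δ' i) = Set.range (Δ i) := by
  have mapsTo_T : ∀ i, Set.MapsTo T (Set.range (Γ i)) (Set.range (Γ' i)) := fun i ↦
    Set.mapsTo_iff_image_subset.2 (hT i).subset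
  have leftInverse : Function.LeftInverse S T := fun x ↦ congr($hST x)
  have mapsTo_S : ∀ i, Set.MapsTo S (Set.range (Γ' i)) (Set.range (Γ i)) := fun i ↦
    (leftInverse.leftInvOn _).mapsTo (hT i).superset
  refine ⟨?_, ?_, h'.image_adjoint_coxeterTransform_range hα₀ hα₁ hΓ hΓ' h.sum_comp_adjoint
    mapsTo_T hST⟩
  · rw [h.coxeterTransform_comp_coxeterTransform hα₀ hα₁ hΓ h'.sum_comp_adjoint mapsTo_S, hTS,
      coxeterTransform_one hα₀ hα₁ hΓ' hΔ']
  · rw [h'.coxeterTransform_comp_coxeterTransform hα₀ hα₁ hΓ' h.sum_comp_adjoint mapsTo_T, hST,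
      coxeterTransform_one hα₀ hα₁ hΓ hΔ]

end

open ContinuousLinearMap in
/-- The Coxeter functor maps isomorphic systems to isomorphic systems:
if `T` is bounded invertible with `T(ran P_i) = ran P̃_i`, then `That` is invertible with
inverse `(T⁻¹)^`, and `That*(ran Q̃_i) = ran Q_i` for all `i`. -/
theorem stmt_14
    {n : ℕ} {H H' E E' : Type*}
    [NormedAddCommGroup H] [InnerProductSpace ℂ H] [CompleteSpace H]
    [NormedAddCommGroup H'] [InnerProductSpace ℂ H'] [CompleteSpace H']
    [NormedAddCommGroup E] [InnerProductSpace ℂ E] [CompleteSpace E]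
    [NormedAddCommGroup E'] [InnerProductSpace ℂ E'] [CompleteSpace E']
    {K K' : Fin n → Type*}
    [∀ i, NormedAddCommGroup (K i)] [∀ i, InnerProductSpace ℂ (K i)] [∀ i, CompleteSpace (K i)]
    [∀ i, NormedAddCommGroup (K' i)] [∀ i, InnerProductSpace ℂ (K' i)] [∀ i, CompleteSpace (K' i)]
    (α : ℝ) (hα : 1 < α)
    (P : Fin n → H →L[ℂ] H)
    (hPsa : ∀ i, IsSelfAdjoint (P i)) (hPidem : ∀ i, P i ∘L P i = P i)
    (hPsum : ∑ i, P i = (α : ℂ) • (1 : H →L[ℂ] H))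
    (P' : Fin n → H' →L[ℂ] H')
    (hP'sa : ∀ i, IsSelfAdjoint (P' i)) (hP'idem : ∀ i, P' i ∘L P' i = P' i)
    (hP'sum : ∑ i, P' i = (α : ℂ) • (1 : H' →L[ℂ] H'))
    (Γ : ∀ i, K i →L[ℂ] H)
    (hΓ₁ : ∀ i, adjoint (Γ i) ∘L Γ i = 1) (hΓ₂ : ∀ i, Γ i ∘L adjoint (Γ i) = P i)
    (Γ' : ∀ i, K' i →L[ℂ] H')
    (hΓ'₁ : ∀ i, adjoint (Γ' i) ∘L Γ' i = 1) (hΓ'₂ : ∀ i, Γ' i ∘L adjoint (Γ' i) = P' i)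
    (Δ : ∀ i, K i →L[ℂ] E)
    (hΔ₁ : ∀ i, adjoint (Δ i) ∘L Δ i = 1)
    (hΔ₂ : ∑ i, Γ i ∘L adjoint (Δ i) = 0)
    (hΔ₃ : ∀ i j, i ≠ j →
      adjoint (Δ i) ∘L Δ j = (-((α : ℂ) - 1)⁻¹) • (adjoint (Γ i) ∘L Γ j))
    (hQsum : ∑ i, Δ i ∘L adjoint (Δ i) =
      ((α : ℂ) / ((α : ℂ) - 1)) • (1 : E →L[ℂ] E))
    (Δ' : ∀ i, K' i →L[ℂ] E')
    (hΔ'₁ : ∀ i, adjoint (Δ' i) ∘L Δ' i = 1)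
    (hΔ'₂ : ∑ i, Γ' i ∘L adjoint (Δ' i) = 0)
    (hΔ'₃ : ∀ i j, i ≠ j →
      adjoint (Δ' i) ∘L Δ' j = (-((α : ℂ) - 1)⁻¹) • (adjoint (Γ' i) ∘L Γ' j))
    (hQ'sum : ∑ i, Δ' i ∘L adjoint (Δ' i) =
      ((α : ℂ) / ((α : ℂ) - 1)) • (1 : E' →L[ℂ] E'))
    (T : H →L[ℂ] H') (S : H' →L[ℂ] H)
    (hTS : T ∘L S = 1) (hST : S ∘L T = 1)
    (hT : ∀ i, ⇑T '' Set.range ⇑(P i) = Set.range ⇑(P' i))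
    (That : E →L[ℂ] E')
    (hThat : That = (((α : ℂ) - 1) / (α : ℂ)) •
      ∑ i, Δ' i ∘L (adjoint (Γ' i) ∘L T ∘L Γ i) ∘L adjoint (Δ i))
    (Shat : E' →L[ℂ] E)
    (hShat : Shat = (((α : ℂ) - 1) / (α : ℂ)) •
      ∑ i, Δ i ∘L (adjoint (Γ i) ∘L S ∘L Γ' i) ∘L adjoint (Δ' i)) :
    That ∘L Shat = 1 ∧ Shat ∘L That = 1 ∧
    ∀ i, ⇑(adjoint That) '' Set.range ⇑(Δ' i ∘L adjoint (Δ' i)) =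
      Set.range ⇑(Δ i ∘L adjoint (Δ i)) := by
  subst hThat hShat
  simp only [← hΓ₂, ← hΓ'₂, range_comp_adjoint_of_adjoint_comp_self, hΓ₁, hΓ'₁, hΔ₁, hΔ'₁] at hT ⊢
  exact stmt_14_general (by exact_mod_cast (zero_lt_one.trans hα).ne') (by exact_mod_cast hα.ne')
    hΓ₁ hΓ'₁ ⟨hΔ₁, hΔ₂, hΔ₃⟩ ⟨hΔ'₁, hΔ'₂, hΔ'₃⟩ hQsum hQ'sum hTS hST hT
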